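/- arXiv:1602.02859 — 2 statements merged into one kernel-verified Lean document; each statement's English description precedes it below -/
import Mathlib

section
/- Let n ≥ 1 and 0 < q, q₁, q₂ ≤ ∞. Then the discrete Young inequality l^{q₁} ∗ l^{q₂} ⊂ l^{q} holds (i.e., there is a constant C with ‖a∗b‖_{l^q} ≤ C‖a‖_{l^{q₁}}‖b‖_{l^{q₂}} for all nonnegative sequences a, b on ℤⁿ) if and only if 1 + 1/q ≤ 1/q₁ + 1/q₂, 1/q ≤ 1/q₁ and 1/q ≤ 1/q₂. -/
/-!
All norms are written as functions `lnorm x` of the reciprocal exponent `x = 1/q`, so that `q = ∞`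
becomes `x = 0` and the hypotheses become linear in `x`, `y = 1/q₁`, `z = 1/q₂`.

Sufficiency. If `x ≥ 1`, then `ℓ^q ∗ ℓ^q ⊂ ℓ^q` by subadditivity of `t ↦ t ^ q`
(`young_of_one_le`), and the inclusions `ℓ^{q₁}, ℓ^{q₂} ⊂ ℓ^q` (`lnorm_anti`) finish. If `x ≤ 1`,
the same inclusions allow `y` and `z` to be decreased until `y + z = 1 + x` with `x ≤ y, z ≤ 1`,
which is the classical Young inequality (`young_classical`). With `A = a ^ q₁` and `B = b ^ q₂` it
follows from Hölder's inequality applied to `A ^ y B ^ z = (A B) ^ x A ^ (y - x) B ^ (z - x)`, since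
the three exponents `x`, `y - x`, `z - x` are nonnegative with sum `1`.

Necessity. Convolving the indicator of a set of `m` points with a point mass gives
`m ^ x ≤ C m ^ y` and `m ^ x ≤ C m ^ z` (`exponents_of_young`); convolving the indicators of the
boxes `[-m, m)ⁿ` and `[0, m)ⁿ` gives `m ^ (n (1 + x)) ≤ C' m ^ (n (y + z))` (`scaling_of_young`).
Letting `m → ∞` compares the exponents.
-/

open scoped ENNReal NNReal BigOperators
open MeasureTheory

noncomputable section

/-- `1/q` for `q ∈ [0,∞]`, with the convention `1/∞ = 0`. -/
def iv (q : ℝ≥0∞) : ℝ := q⁻¹.toReal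

/-- The dual exponent `q'` of `q ∈ [1,∞]`, defined by `1/q + 1/q' = 1`. -/
def dualExp (q : ℝ≥0∞) : ℝ≥0∞ :=
  if q = ∞ then 1 else if q = 1 then ∞ else ENNReal.ofReal (q.toReal / (q.toReal - 1))

/-- Euclidean norm `|k|` of an integer vector `k ∈ ℤⁿ`. -/
def znorm {n : ℕ} (k : Fin n → ℤ) : ℝ := Real.sqrt (∑ i, ((k i : ℝ)) ^ 2)

/-- Japanese bracket `⟨k⟩ = (1+|k|²)^{1/2}` of an integer vector. -/
def zbr {n : ℕ} (k : Fin n → ℤ) : ℝ := Real.sqrt (1 + ∑ i, ((k i : ℝ)) ^ 2)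

/-- Euclidean norm `|x|` on `ℝⁿ` (realized as `Fin n → ℝ`). -/
def rnorm {n : ℕ} (x : Fin n → ℝ) : ℝ := Real.sqrt (∑ i, (x i) ^ 2)

/-- Japanese bracket `⟨x⟩ = (1+|x|²)^{1/2}` on `ℝⁿ`. -/
def rbr {n : ℕ} (x : Fin n → ℝ) : ℝ := Real.sqrt (1 + ∑ i, (x i) ^ 2)

/-- The weighted norm `‖a‖_{l(q,s)}` (weight `⟨k⟩^s`) of a nonnegative sequence on `ℤⁿ`,
valued in `ℝ≥0∞`.  For `q = ∞` it is `sup_k a_k ⟨k⟩^s`, otherwise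
`(∑_k (a_k ⟨k⟩^s)^q)^{1/q}`. -/
def lns (n : ℕ) (q : ℝ≥0∞) (s : ℝ) (a : (Fin n → ℤ) → ℝ≥0∞) : ℝ≥0∞ :=
  if q = ∞ then ⨆ k, a k * ENNReal.ofReal (zbr k ^ s)
  else (∑' k, (a k * ENNReal.ofReal (zbr k ^ s)) ^ q.toReal) ^ (1 / q.toReal)

/-- Convolution of (nonnegative) sequences on `ℤⁿ`: `(a∗b)(k) = ∑_j a_{k-j} b_j`. -/
def dconv {n : ℕ} (a b : (Fin n → ℤ) → ℝ≥0∞) : (Fin n → ℤ) → ℝ≥0∞ :=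
  fun k => ∑' j, a (k - j) * b j

/-- The weighted norm `‖f‖_{L(q,s)}` (weight `⟨x⟩^s`) of a nonnegative function on `ℝⁿ`.
For `q = ∞` it is `ess sup_x f(x) ⟨x⟩^s`, otherwise `(∫ (f(x) ⟨x⟩^s)^q dx)^{1/q}`. -/
def Lns (n : ℕ) (q : ℝ≥0∞) (s : ℝ) (f : (Fin n → ℝ) → ℝ≥0∞) : ℝ≥0∞ :=
  if q = ∞ then essSup (fun x => f x * ENNReal.ofReal (rbr x ^ s)) volume
  else (∫⁻ x, (f x * ENNReal.ofReal (rbr x ^ s)) ^ q.toReal) ^ (1 / q.toReal)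

/-- The power-weighted norm `‖f‖_{𝕃(q,s)}` (weight `|x|^s`) of a nonnegative function on `ℝⁿ`. -/
def Pns (n : ℕ) (q : ℝ≥0∞) (s : ℝ) (f : (Fin n → ℝ) → ℝ≥0∞) : ℝ≥0∞ :=
  if q = ∞ then essSup (fun x => f x * ENNReal.ofReal (rnorm x ^ s)) volume
  else (∫⁻ x, (f x * ENNReal.ofReal (rnorm x ^ s)) ^ q.toReal) ^ (1 / q.toReal)

/-- Convolution of (nonnegative) functions on `ℝⁿ`: `(f∗g)(x) = ∫ f(x-y) g(y) dy`. -/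
def cconv {n : ℕ} (f g : (Fin n → ℝ) → ℝ≥0∞) : (Fin n → ℝ) → ℝ≥0∞ :=
  fun x => ∫⁻ y, f (x - y) * g y

/-- The discrete fractional integral operator `(𝓘_λ a)(k) = ∑_{j ≠ k} a_j / |k-j|^{n-λ}`. -/
def dRiesz (n : ℕ) (lam : ℝ) (a : (Fin n → ℤ) → ℝ≥0∞) : (Fin n → ℤ) → ℝ≥0∞ :=
  fun k => ∑' j, if j = k then 0 else a j * ENNReal.ofReal (znorm (k - j) ^ (lam - (n : ℝ)))

/-- The Riesz potential `(I_λ f)(x) = ∫ f(y) / |x-y|^{n-λ} dy`. -/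
def cRiesz (n : ℕ) (lam : ℝ) (f : (Fin n → ℝ) → ℝ≥0∞) : (Fin n → ℝ) → ℝ≥0∞ :=
  fun x => ∫⁻ y, f y * ENNReal.ofReal (rnorm (x - y) ^ (lam - (n : ℝ)))

/-- Condition `𝒜₁`. -/
def condA1 (n : ℕ) (q q₁ q₂ : ℝ≥0∞) (s s₁ s₂ : ℝ) : Prop :=
  s ≤ s₁ ∧ s ≤ s₂ ∧ 0 ≤ s₁ + s₂ ∧
  1 + max (iv q + s / (n : ℝ)) 0 < max (iv q₁ + s₁ / (n : ℝ)) 0 + max (iv q₂ + s₂ / (n : ℝ)) 0 ∧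
  iv q + s / (n : ℝ) ≤ iv q₁ + s₁ / (n : ℝ) ∧
  iv q + s / (n : ℝ) ≤ iv q₂ + s₂ / (n : ℝ) ∧
  1 ≤ iv q₁ + s₁ / (n : ℝ) + iv q₂ + s₂ / (n : ℝ) ∧
  (iv q + s / (n : ℝ) = iv q₁ + s₁ / (n : ℝ) → q = q₁ ∧ s = s₁) ∧
  (iv q + s / (n : ℝ) = iv q₂ + s₂ / (n : ℝ) → q = q₂ ∧ s = s₂) ∧
  (1 = iv q₁ + s₁ / (n : ℝ) + iv q₂ + s₂ / (n : ℝ) → dualExp q₁ = q₂ ∧ -s₁ = s₂)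

/-- Condition `𝒜₂`. -/
def condA2 (q q₁ q₂ : ℝ≥0∞) (s s₁ s₂ : ℝ) : Prop :=
  s = 0 ∧ s₁ = 0 ∧ s₂ = 0 ∧
  ((q = q₁ ∧ q₂ = 1) ∨ (q = q₂ ∧ q₁ = 1) ∨ (q = ∞ ∧ iv q₁ + iv q₂ = 1))

/-- Condition `𝒜₃`. -/
def condA3 (n : ℕ) (q q₁ q₂ : ℝ≥0∞) (s s₁ s₂ : ℝ) : Prop :=
  s ≤ s₁ ∧ s ≤ s₂ ∧ iv q₁ + iv q₂ = 1 ∧ s₁ + s₂ = 0 ∧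
  iv q + s / (n : ℝ) < 0 ∧ 0 ≤ iv q₁ + s₁ / (n : ℝ) ∧ 0 ≤ iv q₂ + s₂ / (n : ℝ)

/-- Condition `𝒜₄`. -/
def condA4 (n : ℕ) (q q₁ q₂ : ℝ≥0∞) (s s₁ s₂ : ℝ) : Prop :=
  s ≤ s₁ ∧ s ≤ s₂ ∧ 0 ≤ s₁ + s₂ ∧
  1 + (iv q + s / (n : ℝ)) = iv q₁ + s₁ / (n : ℝ) + iv q₂ + s₂ / (n : ℝ) ∧
  iv q ≤ iv q₁ + iv q₂ ∧
  iv q + s / (n : ℝ) < iv q₁ + s₁ / (n : ℝ) ∧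
  iv q + s / (n : ℝ) < iv q₂ + s₂ / (n : ℝ) ∧
  0 < iv q + s / (n : ℝ) ∧
  ((s = s₁ ∨ s = s₂) → q ≠ ∞ ∧ q₁ ≠ 1 ∧ q₂ ≠ 1)

/-- Condition `𝒞₁`. -/
def condC1 (n : ℕ) (lam : ℝ) (q p : ℝ≥0∞) (s t : ℝ) : Prop :=
  s ≤ t ∧
  lam / (n : ℝ) + max (iv q + s / (n : ℝ)) 0 < max (iv p + t / (n : ℝ)) 0 ∧
  lam / (n : ℝ) + iv q + s / (n : ℝ) ≤ 1 ∧
  (lam / (n : ℝ) + iv q + s / (n : ℝ) = 1 → q = ∞ ∧ s = (n : ℝ) - lam)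

/-- Condition `𝒞₃`. -/
def condC3 (n : ℕ) (lam : ℝ) (q p : ℝ≥0∞) (s t : ℝ) : Prop :=
  s ≤ t ∧ p = 1 ∧ t = lam - (n : ℝ) ∧ iv q + s / (n : ℝ) < 0

/-- Condition `𝒞₄`. -/
def condC4 (n : ℕ) (lam : ℝ) (q p : ℝ≥0∞) (s t : ℝ) : Prop :=
  s ≤ t ∧
  lam / (n : ℝ) + iv q + s / (n : ℝ) = iv p + t / (n : ℝ) ∧
  iv q ≤ iv p ∧
  0 < iv q + s / (n : ℝ) ∧
  iv p + t / (n : ℝ) < 1 ∧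
  (s = t → q ≠ ∞ ∧ p ≠ 1)

end

/-! ### Norms indexed by the reciprocal exponent -/

/-- The unweighted `ℓ^q` norm of a nonnegative family, as a function of `x = 1/q ∈ [0, ∞)`
instead of `q`; `x = 0` gives the supremum. -/
noncomputable def lnorm {ι : Type*} (x : ℝ) (a : ι → ℝ≥0∞) : ℝ≥0∞ :=
  if x = 0 then ⨆ k, a k else (∑' k, a k ^ (1 / x)) ^ x

lemma iv_nonneg (q : ℝ≥0∞) : 0 ≤ iv q := ENNReal.toReal_nonneg

lemma lns_eq_lnorm {n : ℕ} {q : ℝ≥0∞} (hq : 0 < q) (a : (Fin n → ℤ) → ℝ≥0∞) :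
    lns n q 0 a = lnorm (iv q) a := by
  unfold lns lnorm iv
  by_cases h : q = ∞
  · simp [h]
  · have h0 : (q⁻¹).toReal ≠ 0 := by
      rw [ENNReal.toReal_inv]
      exact inv_ne_zero (ENNReal.toReal_pos hq.ne' h).ne'
    rw [if_neg h, if_neg h0]
    simp [ENNReal.toReal_inv]

lemma lnorm_zero {ι : Type*} (a : ι → ℝ≥0∞) : lnorm 0 a = ⨆ k, a k := by simp [lnorm]

lemma lnorm_pos {ι : Type*} {x : ℝ} (hx : 0 < x) (a : ι → ℝ≥0∞) :
    lnorm x a = (∑' k, a k ^ (1 / x)) ^ x := by simp [lnorm, hx.ne']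

lemma lnorm_mono {ι : Type*} {x : ℝ} (hx : 0 ≤ x) {a b : ι → ℝ≥0∞} (h : ∀ k, a k ≤ b k) :
    lnorm x a ≤ lnorm x b := by
  rcases hx.eq_or_lt with rfl | hx
  · simpa only [lnorm_zero] using iSup_mono h
  · rw [lnorm_pos hx, lnorm_pos hx]
    gcongr with k
    exact h k

/-- Holds because `f k ^ r ≤ f k * S ^ (r - 1)`, where `S = ∑' k, f k`. -/
lemma tsum_rpow_le {ι : Type*} {r : ℝ} (hr : 1 ≤ r) (f : ι → ℝ≥0∞) :
    ∑' k, f k ^ r ≤ (∑' k, f k) ^ r := by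
  have key : ∀ t : ℝ≥0∞, t ^ r = t * t ^ (r - 1) := fun t => by
    conv_lhs => rw [show r = 1 + (r - 1) by ring,
      ENNReal.rpow_add_of_nonneg _ _ zero_le_one (by linarith), ENNReal.rpow_one]
  rw [key, ← ENNReal.tsum_mul_right]
  refine ENNReal.tsum_le_tsum fun k => ?_
  rw [key]
  have := ENNReal.le_tsum (f := f) k
  have h1 : 0 ≤ r - 1 := by linarith
  gcongr

lemma rpow_tsum_le {ι : Type*} {p : ℝ} (hp : 0 < p) (hp1 : p ≤ 1) (f : ι → ℝ≥0∞) :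
    (∑' k, f k) ^ p ≤ ∑' k, f k ^ p := by
  have h := tsum_rpow_le (r := 1 / p) ((one_le_div hp).2 hp1) (fun k => f k ^ p)
  simp only [← ENNReal.rpow_mul, mul_one_div_cancel hp.ne', ENNReal.rpow_one] at h
  calc (∑' k, f k) ^ p ≤ ((∑' k, f k ^ p) ^ (1 / p)) ^ p := by gcongr
    _ = _ := by rw [← ENNReal.rpow_mul, one_div_mul_cancel hp.ne', ENNReal.rpow_one]

/-- The inclusion `ℓ^{q₁} ⊂ ℓ^{q}` for `q₁ ≤ q`, with constant `1`. -/
lemma lnorm_anti {ι : Type*} {x y : ℝ} (hx : 0 ≤ x) (hxy : x ≤ y) (a : ι → ℝ≥0∞) :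
    lnorm x a ≤ lnorm y a := by
  rcases hxy.eq_or_lt with rfl | hlt
  · rfl
  have hy : 0 < y := hx.trans_lt hlt
  rw [lnorm_pos hy]
  rcases hx.eq_or_lt with rfl | hx
  · rw [lnorm_zero]
    refine iSup_le fun k => ?_
    calc a k = (a k ^ (1 / y)) ^ y := by
          rw [← ENNReal.rpow_mul, one_div_mul_cancel hy.ne', ENNReal.rpow_one]
      _ ≤ _ := by
          gcongr
          exact ENNReal.le_tsum (f := fun k => a k ^ (1 / y)) k
  · rw [lnorm_pos hx]
    have h := tsum_rpow_le (r := y / x) ((one_le_div hx).2 hxy) (fun k => a k ^ (1 / y))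
    simp only [← ENNReal.rpow_mul] at h
    rw [show 1 / y * (y / x) = 1 / x by field_simp] at h
    calc _ ≤ ((∑' k, a k ^ (1 / y)) ^ (y / x)) ^ x := by gcongr
      _ = _ := by rw [← ENNReal.rpow_mul, div_mul_cancel₀ _ hx.ne']

/-! ### Young's inequality -/

lemma tsum_sub_left {n : ℕ} (f : (Fin n → ℤ) → ℝ≥0∞) (k : Fin n → ℤ) :
    ∑' j, f (k - j) = ∑' j, f j := (Equiv.subLeft k).tsum_eq f

lemma tsum_dconv {n : ℕ} (a b : (Fin n → ℤ) → ℝ≥0∞) :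
    ∑' k, dconv a b k = (∑' k, a k) * ∑' k, b k := by
  unfold dconv
  rw [ENNReal.tsum_comm, ← ENNReal.tsum_mul_left]
  refine tsum_congr fun j => ?_
  rw [ENNReal.tsum_mul_right]
  congr 1
  exact (Equiv.subRight j).tsum_eq a

/-- For `q ≤ 1`, subadditivity of `t ↦ t ^ q` reduces `ℓ^q ∗ ℓ^q ⊂ ℓ^q` to `ℓ^1 ∗ ℓ^1 ⊂ ℓ^1`. -/
lemma young_of_one_le {n : ℕ} {x : ℝ} (hx : 1 ≤ x) (a b : (Fin n → ℤ) → ℝ≥0∞) :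
    lnorm x (dconv a b) ≤ lnorm x a * lnorm x b := by
  have h0 : 0 < x := by linarith
  have hp : 0 < 1 / x := by positivity
  rw [lnorm_pos h0, lnorm_pos h0, lnorm_pos h0, ← ENNReal.mul_rpow_of_nonneg _ _ h0.le,
    ← tsum_dconv]
  gcongr with k
  refine (rpow_tsum_le hp ((div_le_one h0).2 hx) _).trans (le_of_eq ?_)
  exact tsum_congr fun j => ENNReal.mul_rpow_of_nonneg _ _ hp.le

/-- Hölder's inequality for three factors, with weights allowed to vanish. -/
lemma tsum_holder₃ {ι : Type*} [Countable ι] {u v w : ℝ} (hu : 0 ≤ u) (hv : 0 ≤ v) (hw : 0 ≤ w)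
    (h : u + v + w = 1) (f g l : ι → ℝ≥0∞) :
    ∑' j, f j ^ u * g j ^ v * l j ^ w ≤ (∑' j, f j) ^ u * (∑' j, g j) ^ v * (∑' j, l j) ^ w := by
  let _ : MeasurableSpace ι := ⊤
  have := ENNReal.lintegral_prod_norm_pow_le (μ := Measure.count) (Finset.univ : Finset (Fin 3))
    (f := ![f, g, l]) (fun i _ => (measurable_from_top).aemeasurable) (p := ![u, v, w])
    (by simpa [Fin.sum_univ_three] using h) (by
      intro i _; fin_cases i <;> simpa)
  simpa [Fin.prod_univ_three, lintegral_count] using this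

/-- The pointwise bound behind Young's inequality, to be used with `A = a ^ q₁`, `B = b ^ q₂`. -/
lemma dconv_rpow_le {n : ℕ} {x y z : ℝ} (hx : 0 ≤ x) (hxy : x ≤ y) (hxz : x ≤ z)
    (h : y + z = 1 + x) (A B : (Fin n → ℤ) → ℝ≥0∞) (k : Fin n → ℤ) :
    dconv (fun j => A j ^ y) (fun j => B j ^ z) k ≤
      dconv A B k ^ x * (∑' j, A j) ^ (y - x) * (∑' j, B j) ^ (z - x) := by
  have := tsum_holder₃ hx (sub_nonneg.2 hxy) (sub_nonneg.2 hxz) (by linarith)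
    (fun j => A (k - j) * B j) (fun j => A (k - j)) B
  rw [tsum_sub_left A k] at this
  refine le_trans (le_of_eq (tsum_congr fun j => ?_)) this
  have split : ∀ (t : ℝ≥0∞) {s : ℝ}, x ≤ s → t ^ s = t ^ x * t ^ (s - x) := fun t s hs => by
    rw [← ENNReal.rpow_add_of_nonneg _ _ hx (sub_nonneg.2 hs)]
    congr 1
    ring
  simp only
  rw [split _ hxy, split _ hxz, ENNReal.mul_rpow_of_nonneg _ _ hx]
  ring

/-- Young's inequality on the scaling line, where `x ≤ y` and `x ≤ z` force `x, y, z ≤ 1`. -/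
lemma young_classical {n : ℕ} {x y z : ℝ} (hx : 0 ≤ x) (hxy : x ≤ y) (hxz : x ≤ z)
    (h : y + z = 1 + x) (a b : (Fin n → ℤ) → ℝ≥0∞) :
    lnorm x (dconv a b) ≤ lnorm y a * lnorm z b := by
  rcases (hx.trans hxy).eq_or_lt with rfl | hy
  · obtain rfl : x = 0 := le_antisymm hxy hx
    obtain rfl : z = 1 := by linarith
    simp only [lnorm_zero, lnorm_pos one_pos, div_one, ENNReal.rpow_one]
    refine iSup_le fun k => ?_
    rw [← ENNReal.tsum_mul_left]
    exact ENNReal.tsum_le_tsum fun j => by gcongr; exact le_iSup a _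
  rcases (hx.trans hxz).eq_or_lt with rfl | hz
  · obtain rfl : x = 0 := le_antisymm hxz hx
    obtain rfl : y = 1 := by linarith
    simp only [lnorm_zero, lnorm_pos one_pos, div_one, ENNReal.rpow_one]
    refine iSup_le fun k => ?_
    rw [← tsum_sub_left a k, ← ENNReal.tsum_mul_right]
    exact ENNReal.tsum_le_tsum fun j => by gcongr; exact le_iSup b _
  have ha : (fun j => (a j ^ (1 / y)) ^ y) = a := funext fun j => by
    rw [← ENNReal.rpow_mul, one_div_mul_cancel hy.ne', ENNReal.rpow_one]
  have hb : (fun j => (b j ^ (1 / z)) ^ z) = b := funext fun j => by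
    rw [← ENNReal.rpow_mul, one_div_mul_cancel hz.ne', ENNReal.rpow_one]
  rw [lnorm_pos hy, lnorm_pos hz]
  have key := dconv_rpow_le hx hxy hxz h (fun j => a j ^ (1 / y)) (fun j => b j ^ (1 / z))
  have total := tsum_dconv (fun j => a j ^ (1 / y)) (fun j => b j ^ (1 / z))
  rw [ha, hb] at key
  set A : (Fin n → ℤ) → ℝ≥0∞ := fun j => a j ^ (1 / y)
  set B : (Fin n → ℤ) → ℝ≥0∞ := fun j => b j ^ (1 / z)
  set S := ∑' j, A j
  set T := ∑' j, B j
  rcases hx.eq_or_lt with rfl | hx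
  · rw [lnorm_zero]
    exact iSup_le fun k => by simpa using key k
  rw [lnorm_pos hx]
  have hyx : 0 ≤ y - x := sub_nonneg.2 hxy
  have hzx : 0 ≤ z - x := sub_nonneg.2 hxz
  calc (∑' k, dconv a b k ^ (1 / x)) ^ x
      ≤ (∑' k, dconv A B k * (S ^ (y - x) * T ^ (z - x)) ^ (1 / x)) ^ x := by
        gcongr with k
        have hp : 0 ≤ 1 / x := by positivity
        calc _ ≤ (dconv A B k ^ x * S ^ (y - x) * T ^ (z - x)) ^ (1 / x) := by
              gcongr
              exact key k
          _ = _ := by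
              rw [mul_assoc, ENNReal.mul_rpow_of_nonneg _ _ hp, ← ENNReal.rpow_mul,
                mul_one_div_cancel hx.ne', ENNReal.rpow_one]
    _ = (S ^ x * S ^ (y - x)) * (T ^ x * T ^ (z - x)) := by
        rw [ENNReal.tsum_mul_right, total, ENNReal.mul_rpow_of_nonneg _ _ hx.le,
          ENNReal.mul_rpow_of_nonneg _ _ hx.le, ← ENNReal.rpow_mul,
          one_div_mul_cancel hx.ne', ENNReal.rpow_one]
        ring
    _ = S ^ y * T ^ z := by
        rw [← ENNReal.rpow_add_of_nonneg _ _ hx.le hyx, ← ENNReal.rpow_add_of_nonneg _ _ hx.le hzx]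
        congr 2 <;> ring

/-- Young's inequality in the full range, with constant `1`. -/
lemma young_general {n : ℕ} {x y z : ℝ} (hx : 0 ≤ x) (hxy : x ≤ y) (hxz : x ≤ z)
    (h : 1 + x ≤ y + z) (a b : (Fin n → ℤ) → ℝ≥0∞) :
    lnorm x (dconv a b) ≤ lnorm y a * lnorm z b := by
  rcases le_total 1 x with h1 | h1
  · exact (young_of_one_le h1 a b).trans
      (mul_le_mul' (lnorm_anti hx hxy a) (lnorm_anti hx hxz b))
  -- Enlarging `q₁` and `q₂` reaches the scaling line: `y' = min y 1`, `z' = 1 + x - y'`.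
  have hy' : x ≤ min y 1 := le_min hxy h1
  have hz' : x ≤ 1 + x - min y 1 := by linarith [min_le_right y 1]
  have hzz : 1 + x - min y 1 ≤ z := by
    rcases min_choice y 1 with h' | h' <;> rw [h'] <;> linarith
  exact (young_classical hx hy' hz' (by ring) a b).trans
    (mul_le_mul' (lnorm_anti (hx.trans hy') (min_le_left _ _) a)
      (lnorm_anti (hx.trans hz') hzz b))

/-! ### Necessity of the exponent conditions -/

lemma lnorm_indicator {ι : Type*} {x : ℝ} (hx : 0 ≤ x) (c : ℝ≥0∞) {S : Finset ι}
    (hS : S.Nonempty) :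
    lnorm x ((S : Set ι).indicator fun _ => c) = c * (S.card : ℝ≥0∞) ^ x := by
  classical
  rcases hx.eq_or_lt with rfl | hx
  · rw [lnorm_zero, ENNReal.rpow_zero, mul_one]
    obtain ⟨s, hs⟩ := hS
    refine le_antisymm (iSup_le fun k => Set.indicator_le_self' (fun _ _ => zero_le) k) ?_
    refine le_trans ?_ (le_iSup _ s)
    simp [hs]
  · rw [lnorm_pos hx, tsum_eq_sum (s := S)]
    · rw [Finset.sum_congr rfl (g := fun _ => c ^ (1 / x))]
      · rw [Finset.sum_const, nsmul_eq_mul, ENNReal.mul_rpow_of_nonneg _ _ hx.le,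
          ← ENNReal.rpow_mul, one_div_mul_cancel hx.ne', ENNReal.rpow_one, mul_comm]
      · intro k hk
        simp [hk]
    · intro k hk
      simp [hk, hx]

lemma exponent_le_of_growth {u v : ℝ} {D : ℝ≥0∞} (hD : D ≠ ∞)
    (h : ∀ m : ℕ, 1 ≤ m → (m : ℝ≥0∞) ^ u ≤ D * (m : ℝ≥0∞) ^ v) : u ≤ v := by
  by_contra! hlt
  have ht := ((tendsto_rpow_atTop (sub_pos.2 hlt)).comp tendsto_natCast_atTop_atTop)
  obtain ⟨m, hm1, hm⟩ := ((Filter.eventually_ge_atTop 1).and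
    (ht.eventually_gt_atTop D.toReal)).exists
  have hm0 : (0 : ℝ) < m := by exact_mod_cast hm1
  have h' := ENNReal.toReal_mono
    (ENNReal.mul_ne_top hD (ENNReal.rpow_ne_top_of_ne_zero (by simp; omega) (by simp))) (h m hm1)
  rw [ENNReal.toReal_mul, ← ENNReal.toReal_rpow, ← ENNReal.toReal_rpow,
    ENNReal.toReal_natCast] at h'
  have : (m : ℝ) ^ u = (m : ℝ) ^ (u - v) * (m : ℝ) ^ v := by
    rw [← Real.rpow_add hm0]
    congr 1
    ring
  rw [this] at h'
  exact absurd (le_of_mul_le_mul_right h' (by positivity)) (not_le.2 hm)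

/-- Testing on indicators of finite sets against a point mass at the origin. -/
lemma exponents_of_young {n : ℕ} (hn : 1 ≤ n) {x y z : ℝ} (hx : 0 ≤ x) (hy : 0 ≤ y) (hz : 0 ≤ z)
    {C : ℝ≥0} (H : ∀ a b : (Fin n → ℤ) → ℝ≥0∞,
      lnorm x (dconv a b) ≤ C * lnorm y a * lnorm z b) : x ≤ y ∧ x ≤ z := by
  classical
  have : Nonempty (Fin n) := ⟨⟨0, hn⟩⟩
  set δ : (Fin n → ℤ) → ℝ≥0∞ := ((({0} : Finset (Fin n → ℤ))) : Set _).indicator fun _ => 1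
  have hδ : ∀ {w : ℝ}, 0 ≤ w → lnorm w δ = 1 := fun hw => by
    rw [lnorm_indicator hw _ (Finset.singleton_nonempty _)]
    simp
  have hright : ∀ a, dconv a δ = a := fun a => funext fun k => by
    unfold dconv
    rw [tsum_eq_single 0]
    · simp [δ]
    · intro j hj
      simp [δ, hj]
  have hleft : ∀ b, dconv δ b = b := fun b => funext fun k => by
    unfold dconv
    rw [tsum_eq_single k]
    · simp [δ]
    · intro j hj
      simp [δ, sub_eq_zero, hj.symm]
  constructor <;> refine exponent_le_of_growth (D := C) ENNReal.coe_ne_top fun m hm => ?_ <;>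
    obtain ⟨S, hS⟩ := Infinite.exists_subset_card_eq (Fin n → ℤ) m <;>
    have hne : S.Nonempty := Finset.card_pos.1 (by omega)
  · have := H ((S : Set _).indicator fun _ => 1) δ
    rwa [hright, hδ hz, mul_one, lnorm_indicator hx _ hne, lnorm_indicator hy _ hne, hS,
      one_mul, one_mul] at this
  · have := H δ ((S : Set _).indicator fun _ => 1)
    rwa [hleft, hδ hy, mul_one, lnorm_indicator hx _ hne, lnorm_indicator hz _ hne, hS,
      one_mul, one_mul] at this

/-- Testing on the indicators of the boxes `[-m, m)ⁿ` and `[0, m)ⁿ`, whose convolution is at least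
`mⁿ` on `[0, m)ⁿ`. -/
lemma scaling_of_young {n : ℕ} (hn : 1 ≤ n) {x y z : ℝ} (hx : 0 ≤ x) (hy : 0 ≤ y) (hz : 0 ≤ z)
    {C : ℝ≥0} (H : ∀ a b : (Fin n → ℤ) → ℝ≥0∞,
      lnorm x (dconv a b) ≤ C * lnorm y a * lnorm z b) : 1 + x ≤ y + z := by
  classical
  have hn0 : (0 : ℝ) < n := by exact_mod_cast hn
  suffices h : n * (1 + x) ≤ n * (y + z) from le_of_mul_le_mul_left h hn0
  refine exponent_le_of_growth (D := C * (2 : ℝ≥0∞) ^ (n * y))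
    (ENNReal.mul_ne_top ENNReal.coe_ne_top (ENNReal.rpow_ne_top_of_nonneg (by positivity)
      (by simp))) fun m hm => ?_
  set S : Finset (Fin n → ℤ) := Fintype.piFinset fun _ => Finset.Ico (-(m : ℤ)) m with hSdef
  set T : Finset (Fin n → ℤ) := Fintype.piFinset fun _ => Finset.Ico (0 : ℤ) m with hTdef
  have hScard : S.card = (2 * m) ^ n := by
    rw [hSdef, Fintype.card_piFinset]
    simp only [Int.card_Ico, Finset.prod_const, Finset.card_univ, Fintype.card_fin]
    congr 1
    omega
  have hTcard : T.card = m ^ n := by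
    rw [hTdef, Fintype.card_piFinset]
    simp
  have hSne : S.Nonempty := Finset.card_pos.1 (by rw [hScard]; positivity)
  have hTne : T.Nonempty := Finset.card_pos.1 (by rw [hTcard]; positivity)
  have hlow : ∀ k, (T : Set (Fin n → ℤ)).indicator (fun _ => (m : ℝ≥0∞) ^ n) k ≤
      dconv ((S : Set _).indicator fun _ => 1) ((T : Set _).indicator fun _ => 1) k := by
    intro k
    refine Set.indicator_apply_le' (fun hk => ?_) (fun _ => zero_le)
    refine le_trans (le_of_eq ?_) (ENNReal.sum_le_tsum T)
    rw [Finset.sum_congr rfl (g := fun _ => (1 : ℝ≥0∞))]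
    · simp [hTcard]
    · intro j hj
      have hkj : k - j ∈ S := by
        simp only [Finset.mem_coe, hTdef, hSdef, Fintype.mem_piFinset, Finset.mem_Ico,
          Pi.sub_apply] at hk hj ⊢
        intro i
        have := hk i
        have := hj i
        omega
      simp [hkj, hj]
  have h := (lnorm_mono hx hlow).trans (H _ _)
  rw [lnorm_indicator hx _ hTne, lnorm_indicator hy _ hSne, lnorm_indicator hz _ hTne, hScard,
    hTcard, one_mul, one_mul] at h
  push_cast at h
  simp only [← ENNReal.rpow_natCast, ← ENNReal.rpow_mul] at h
  rw [ENNReal.mul_rpow_of_nonneg _ _ (by positivity),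
    ← ENNReal.rpow_add_of_nonneg _ _ hn0.le (by positivity)] at h
  calc (m : ℝ≥0∞) ^ (n * (1 + x)) = (m : ℝ≥0∞) ^ (n + n * x) := by congr 1; ring
    _ ≤ _ := h
    _ = C * 2 ^ (n * y) * ((m : ℝ≥0∞) ^ (n * y) * (m : ℝ≥0∞) ^ (n * z)) := by ring
    _ = _ := by
      rw [← ENNReal.rpow_add_of_nonneg _ _ (by positivity) (by positivity), mul_add]

/-- sharp discrete Young inequality, unweighted. -/
theorem discrete_young_sharp
    (n : ℕ) (hn : 1 ≤ n) (q q₁ q₂ : ℝ≥0∞) (hq : 0 < q) (hq₁ : 0 < q₁) (hq₂ : 0 < q₂) :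
    (∃ C : ℝ≥0, ∀ a b : (Fin n → ℤ) → ℝ≥0∞,
        lns n q 0 (dconv a b) ≤ C * lns n q₁ 0 a * lns n q₂ 0 b) ↔
      (1 + iv q ≤ iv q₁ + iv q₂ ∧ iv q ≤ iv q₁ ∧ iv q ≤ iv q₂) := by
  simp only [lns_eq_lnorm hq, lns_eq_lnorm hq₁, lns_eq_lnorm hq₂]
  constructor
  · rintro ⟨C, H⟩
    exact ⟨scaling_of_young hn (iv_nonneg _) (iv_nonneg _) (iv_nonneg _) H,
      exponents_of_young hn (iv_nonneg _) (iv_nonneg _) (iv_nonneg _) H⟩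
  · rintro ⟨h, h₁, h₂⟩
    exact ⟨1, fun a b => by simpa using young_general (iv_nonneg _) h₁ h₂ h a b⟩
end

section
/- Let n ≥ 1 and s, s₁, s₂ ∈ ℝ with s > 0, s ≤ s₁ and s ≤ s₂. Then the set of exponents t ∈ (0,∞] for which sup_{x∈ℝⁿ} ‖ ⟨x⟩^s / (⟨x−y⟩^{s₁} ⟨y⟩^{s₂}) ‖_{L^t_y} is finite equals (n/(s₁+s₂−s), ∞] if s = s₁ or s = s₂, and equals [n/(s₁+s₂−s), ∞] if s < s₁ and s < s₂. Here ‖·‖_{L^t_y} denotes the L^t(ℝⁿ) norm in the variable y. -/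
/-!
Write `w = ⟨x⟩`, `u = ⟨x-y⟩`, `v = ⟨y⟩`. For finite `t`, the `t`-th power of the norm is
`w^c ∫ u^{-a} v^{-b} dy` with `(a, b, c) = (s₁t, s₂t, st)`, so the exponent condition
compares `a + b - c` with `n`. Brackets are comparable to `1 + ‖·‖` for the sup norm, and
`w ≲ max(u, v)`; by the symmetry `y ↦ x - y` one may look at the region `v ≤ u`, where `w ≲ u`.

* If `a + b - c > n`, the integrand is `≲ v^{-(a+b-c)}`, which is integrable (`bounded_of_lt`).
* If `a + b - c = n` and `c < a, b`, the integrand is `≲ w^{-n} φ(|y|/w)` with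
  `φ(r) = min(r^{-b}, r^{-(a+b)})`. Since `b < n < a + b`, `φ(|·|)` is integrable, and scaling
  makes its integral independent of `w` (`bounded_of_eq`).
* Conversely, integrating over `‖y‖ < ‖x‖` shows `‖x‖^{n-(a+b-c)}` is bounded, so
  `n ≤ a + b - c` (`le_of_bounded`).
* If moreover `a = c`, then on `‖y‖ < ‖x‖` the integrand is `≳ v^{-b}`; letting `x → ∞` makes
  `⟨y⟩^{-b}` integrable, which forces `n < b = a + b - c` (`lt_of_bounded`). The case `b = c`
  follows by symmetry.

For `t = ∞`, the weight is bounded because `w ≲ u v` (`bounded_top`).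
-/

open scoped ENNReal NNReal BigOperators
open MeasureTheory

open Module

/-! ### The Japanese bracket -/

lemma one_le_rbr {n : ℕ} (x : Fin n → ℝ) : 1 ≤ rbr x := by
  unfold rbr
  rw [Real.one_le_sqrt]
  have : 0 ≤ ∑ i, (x i) ^ 2 := Finset.sum_nonneg fun i _ => sq_nonneg _
  linarith

lemma norm_le_rbr {n : ℕ} (x : Fin n → ℝ) : ‖x‖ ≤ rbr x := by
  refine (pi_norm_le_iff_of_nonneg (zero_le_one.trans (one_le_rbr x))).2 fun i => ?_
  unfold rbr
  apply Real.le_sqrt_of_sq_le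
  rw [Real.norm_eq_abs, sq_abs]
  have := Finset.single_le_sum (f := fun i => (x i) ^ 2) (fun i _ => sq_nonneg _)
    (Finset.mem_univ i)
  linarith

lemma rbr_le_norm {n : ℕ} (x : Fin n → ℝ) : rbr x ≤ (n + 1) * (1 + ‖x‖) := by
  unfold rbr
  apply Real.sqrt_le_iff.2 ⟨by positivity, ?_⟩
  have h : ∑ i, (x i) ^ 2 ≤ n * ‖x‖ ^ 2 := by
    have : ∀ i ∈ Finset.univ, (x i) ^ 2 ≤ ‖x‖ ^ 2 := fun i _ => by
      rw [← sq_abs, ← Real.norm_eq_abs]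
      exact pow_le_pow_left₀ (norm_nonneg _) (norm_le_pi_norm x i) 2
    simpa using Finset.sum_le_sum this
  have h0 : (0 : ℝ) ≤ n := n.cast_nonneg
  have h1 := norm_nonneg x
  calc 1 + ∑ i, (x i) ^ 2 ≤ (n + 1) * (1 + ‖x‖ ^ 2) := by nlinarith [sq_nonneg ‖x‖]
    _ ≤ (n + 1) * (1 + ‖x‖) ^ 2 := by gcongr; nlinarith
    _ ≤ (n + 1) ^ 2 * (1 + ‖x‖) ^ 2 := by gcongr; nlinarith
    _ = _ := by ring

/-- Quasi-triangle inequality for the bracket, with an additive right-hand side. -/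
lemma rbr_le_add {n : ℕ} (x y : Fin n → ℝ) :
    rbr x ≤ 2 * (n + 1) * (rbr (x - y) + rbr y) := by
  have h := rbr_le_norm x
  have h1 : ‖x‖ ≤ ‖x - y‖ + ‖y‖ := by simpa using norm_add_le (x - y) y
  have h2 := norm_le_rbr (x - y)
  have h3 := norm_le_rbr y
  have h4 := one_le_rbr y
  have h5 := one_le_rbr (x - y)
  calc rbr x ≤ (n + 1) * (1 + ‖x‖) := h
    _ ≤ (n + 1) * (2 * (rbr (x - y) + rbr y)) := by gcongr; linarith
    _ = _ := by ring

@[fun_prop]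
lemma continuous_rbr {n : ℕ} : Continuous (rbr : (Fin n → ℝ) → ℝ) := by
  unfold rbr; fun_prop

/-! ### Reduction to an integral, and the supercritical bound -/

/-- The quantity `⟨x⟩^c ∫ ⟨x-y⟩^{-a} ⟨y⟩^{-b} dy`; for finite `t` it is the `t`-th power of the
`L^t_y` norm, with `(a, b, c) = (s₁t, s₂t, st)`. -/
noncomputable def brInt (n : ℕ) (a b c : ℝ) (x : Fin n → ℝ) : ℝ≥0∞ :=
  ∫⁻ y, ENNReal.ofReal (rbr x ^ c * rbr (x - y) ^ (-a) * rbr y ^ (-b))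

lemma Lns_eq_brInt {n : ℕ} {p s s₁ s₂ : ℝ} (hp : 0 < p) (x : Fin n → ℝ) :
    Lns n (ENNReal.ofReal p) 0
      (fun y => ENNReal.ofReal (rbr x ^ s / (rbr (x - y) ^ s₁ * rbr y ^ s₂))) =
    brInt n (s₁ * p) (s₂ * p) (s * p) x ^ (1 / p) := by
  unfold Lns brInt
  rw [if_neg ENNReal.ofReal_ne_top, ENNReal.toReal_ofReal hp.le]
  congr 1
  refine lintegral_congr fun y => ?_
  have hw := zero_le_one.trans (one_le_rbr x)
  have hv := zero_le_one.trans (one_le_rbr y)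
  have hu := zero_le_one.trans (one_le_rbr (x - y))
  rw [Real.rpow_zero, ENNReal.ofReal_one, mul_one,
    ENNReal.ofReal_rpow_of_nonneg (by positivity) hp.le, Real.div_rpow (by positivity)
    (by positivity), Real.mul_rpow (by positivity) (by positivity), ← Real.rpow_mul hw,
    ← Real.rpow_mul hv, ← Real.rpow_mul hu, Real.rpow_neg hu, Real.rpow_neg hv,
    div_eq_mul_inv, mul_inv, mul_assoc]

lemma brInt_symm {n : ℕ} (a b c : ℝ) (x : Fin n → ℝ) : brInt n a b c x = brInt n b a c x := by
  unfold brInt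
  rw [← lintegral_sub_left_eq_self _ x]
  refine lintegral_congr fun y => ?_
  rw [sub_sub_cancel, mul_right_comm]

lemma exists_bound_Lns_iff {n : ℕ} {p s s₁ s₂ : ℝ} (hp : 0 < p) :
    (∃ C : ℝ≥0, ∀ x : Fin n → ℝ, Lns n (ENNReal.ofReal p) 0
      (fun y => ENNReal.ofReal (rbr x ^ s / (rbr (x - y) ^ s₁ * rbr y ^ s₂))) ≤ C) ↔
    ∃ C : ℝ≥0, ∀ x, brInt n (s₁ * p) (s₂ * p) (s * p) x ≤ C := by
  simp only [Lns_eq_brInt hp]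
  constructor
  · rintro ⟨C, hC⟩
    refine ⟨C ^ p, fun x => ?_⟩
    have := ENNReal.rpow_le_rpow (hC x) hp.le
    rwa [← ENNReal.rpow_mul, one_div_mul_cancel hp.ne', ENNReal.rpow_one,
      ← ENNReal.coe_rpow_of_nonneg _ hp.le] at this
  · rintro ⟨C, hC⟩
    refine ⟨C ^ (1 / p), fun x => ?_⟩
    rw [ENNReal.coe_rpow_of_nonneg _ (by positivity)]
    exact ENNReal.rpow_le_rpow (hC x) (by positivity)

lemma lintegral_rbr_lt_top {n : ℕ} {r : ℝ} (hr : n < r) :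
    ∫⁻ y : Fin n → ℝ, ENNReal.ofReal (rbr y ^ (-r)) < ∞ := by
  have hr0 : 0 < r := lt_of_le_of_lt (Nat.cast_nonneg n) hr
  have h : Integrable (fun y : Fin n → ℝ => (1 + ‖y‖) ^ (-r)) :=
    integrable_one_add_norm (by simpa using hr)
  have h2 : Integrable (fun y : Fin n → ℝ => rbr y ^ (-r)) := by
    refine (h.const_mul (2 ^ r)).mono' (by
      refine Measurable.aestronglyMeasurable ?_
      have := (continuous_rbr (n := n)).measurable
      fun_prop) (Filter.Eventually.of_forall fun y => ?_)
    have hv := one_le_rbr y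
    have hv' := norm_le_rbr y
    rw [Real.norm_of_nonneg (by positivity)]
    calc rbr y ^ (-r) ≤ ((1 + ‖y‖) / 2) ^ (-r) :=
          Real.rpow_le_rpow_of_nonpos (by positivity) (by linarith) (by linarith)
      _ = _ := by
          rw [Real.div_rpow (by positivity) (by positivity), Real.rpow_neg zero_le_two,
            div_inv_eq_mul, mul_comm]
  exact h2.lintegral_lt_top

/-- If `v ≤ u`, hence `w ≲ u`, then `w^c u^{-a} v^{-b} ≲ v^{c-a-b}`. -/
lemma pw_strict {u v w M a b c : ℝ} (hv : 1 ≤ v) (hw : 1 ≤ w) (hM : 1 ≤ M) (hvu : v ≤ u)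
    (hwu : w ≤ M * u) (hc : 0 < c) (hca : c ≤ a) :
    w ^ c * u ^ (-a) * v ^ (-b) ≤ M ^ c * v ^ (-(a + b - c)) := by
  have hv0 : 0 < v := by linarith
  have hu0 : 0 < u := by linarith
  calc w ^ c * u ^ (-a) * v ^ (-b) ≤ (M * u) ^ c * u ^ (-a) * v ^ (-b) := by gcongr
    _ = M ^ c * u ^ (c - a) * v ^ (-b) := by
        rw [Real.mul_rpow (by positivity) hu0.le, mul_assoc (M ^ c), ← Real.rpow_add hu0,
          ← sub_eq_add_neg]
    _ ≤ M ^ c * v ^ (c - a) * v ^ (-b) := by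
        gcongr ?_ * ?_ * ?_
        exact Real.rpow_le_rpow_of_nonpos hv0 hvu (by linarith)
    _ = _ := by
        rw [mul_assoc, ← Real.rpow_add hv0]; congr 2; ring

lemma rbr_cmp {n : ℕ} (x y : Fin n → ℝ) :
    (rbr y ≤ rbr (x - y) ∧ rbr x ≤ 4 * (n + 1) * rbr (x - y)) ∨
    (rbr (x - y) ≤ rbr y ∧ rbr x ≤ 4 * (n + 1) * rbr y) := by
  have h := rbr_le_add x y
  have h0 : (0 : ℝ) ≤ n := n.cast_nonneg
  rcases le_total (rbr y) (rbr (x - y)) with h1 | h1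
  · exact Or.inl ⟨h1, by nlinarith⟩
  · exact Or.inr ⟨h1, by nlinarith⟩

lemma bounded_of_lt {n : ℕ} {a b c : ℝ} (hc : 0 < c) (ha : c ≤ a) (hb : c ≤ b)
    (h : n < a + b - c) : ∃ C : ℝ≥0, ∀ x, brInt n a b c x ≤ C := by
  set M : ℝ := 4 * (n + 1) with hM
  have hM1 : 1 ≤ M := by have : (0 : ℝ) ≤ n := n.cast_nonneg
                         linarith
  set I := ∫⁻ y : Fin n → ℝ, ENNReal.ofReal (rbr y ^ (-(a + b - c))) with hI
  have hIt : I < ∞ := lintegral_rbr_lt_top h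
  have hfin : ENNReal.ofReal (M ^ c) * (I + I) ≠ ∞ :=
    ENNReal.mul_ne_top ENNReal.ofReal_ne_top (ENNReal.add_ne_top.2 ⟨hIt.ne, hIt.ne⟩)
  refine ⟨(ENNReal.ofReal (M ^ c) * (I + I)).toNNReal, fun x => ?_⟩
  rw [ENNReal.coe_toNNReal hfin]
  have hmeas : Measurable (fun y : Fin n → ℝ => ENNReal.ofReal (rbr y ^ (-(a + b - c)))) := by
    have := (continuous_rbr (n := n)).measurable
    fun_prop
  have hI2 : ∫⁻ y : Fin n → ℝ, ENNReal.ofReal (rbr (x - y) ^ (-(a + b - c))) = I :=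
    lintegral_sub_left_eq_self (fun y => ENNReal.ofReal (rbr y ^ (-(a + b - c)))) x
  calc brInt n a b c x ≤ ∫⁻ y, ENNReal.ofReal (M ^ c) *
        (ENNReal.ofReal (rbr y ^ (-(a + b - c))) +
          ENNReal.ofReal (rbr (x - y) ^ (-(a + b - c)))) := by
        refine lintegral_mono fun y => ?_
        have hv := one_le_rbr y
        have hu := one_le_rbr (x - y)
        have hw := one_le_rbr x
        rw [← ENNReal.ofReal_add (by positivity) (by positivity),
          ← ENNReal.ofReal_mul (by positivity)]
        apply ENNReal.ofReal_le_ofReal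
        have p1 : 0 ≤ M ^ c * rbr y ^ (-(a + b - c)) := by positivity
        have p2 : 0 ≤ M ^ c * rbr (x - y) ^ (-(a + b - c)) := by positivity
        rcases rbr_cmp x y with ⟨h1, h2⟩ | ⟨h1, h2⟩
        · have := pw_strict (b := b) hv hw hM1 h1 h2 hc ha
          linarith
        · have := pw_strict (b := a) hu hw hM1 h1 h2 hc hb
          rw [mul_right_comm, mul_add]
          rw [add_comm b a] at this
          linarith
    _ = ENNReal.ofReal (M ^ c) * (I + I) := by
        rw [lintegral_const_mul' _ _ ENNReal.ofReal_ne_top, lintegral_add_left hmeas, hI2]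

/-! ### The critical case -/

/-- The profile `min(r^{-d}, r^{-e})`; for `d < n < e` it gives a radial integrable function
on `ℝⁿ`. -/
noncomputable def profile (d e r : ℝ) : ℝ := min (r ^ (-d)) (r ^ (-e))

lemma measurable_profile (d e : ℝ) : Measurable (profile d e) := by
  unfold profile; fun_prop

lemma profile_nonneg {d e r : ℝ} (hr : 0 ≤ r) : 0 ≤ profile d e r :=
  le_min (Real.rpow_nonneg hr _) (Real.rpow_nonneg hr _)

lemma integrable_profile {n : ℕ} {d e : ℝ} (hn : 1 ≤ n) (hd : d < n) (he : n < e) :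
    Integrable (fun y : Fin n → ℝ => profile d e ‖y‖) := by
  have : Nontrivial (Fin n → ℝ) := by
    have : Nonempty (Fin n) := ⟨⟨0, hn⟩⟩
    infer_instance
  rw [integrable_fun_norm_addHaar]
  have key : ∀ q r : ℝ, 0 < r → r ^ (finrank ℝ (Fin n → ℝ) - 1) * r ^ (-q) = r ^ (n - 1 - q) := by
    intro q r hr
    rw [← Real.rpow_natCast, ← Real.rpow_add hr]
    simp [Nat.cast_sub hn, sub_eq_add_neg]
  have hm : Measurable fun r : ℝ => r ^ (finrank ℝ (Fin n → ℝ) - 1) • profile d e r :=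
    (measurable_id.pow_const _).smul (measurable_profile d e)
  rw [← Set.Ioc_union_Ioi_eq_Ioi zero_le_one]
  refine IntegrableOn.union ?_ ?_
  · have h1 : IntegrableOn (fun r : ℝ => r ^ (n - 1 - d)) (Set.Ioc 0 1) := by
      rw [← intervalIntegrable_iff_integrableOn_Ioc_of_le zero_le_one]
      exact intervalIntegral.intervalIntegrable_rpow' (by linarith)
    refine Integrable.mono' h1 hm.aestronglyMeasurable ?_
    filter_upwards [ae_restrict_mem measurableSet_Ioc] with r hr
    have hr0 : 0 < r := hr.1
    rw [smul_eq_mul, Real.norm_of_nonneg (mul_nonneg (by positivity) (profile_nonneg hr0.le)),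
      ← key d r hr0]
    gcongr
    exact min_le_left _ _
  · have h1 : IntegrableOn (fun r : ℝ => r ^ (n - 1 - e)) (Set.Ioi 1) :=
      integrableOn_Ioi_rpow_of_lt (by linarith) one_pos
    refine Integrable.mono' h1 hm.aestronglyMeasurable ?_
    filter_upwards [ae_restrict_mem measurableSet_Ioi] with r hr
    have hr0 : 0 < r := one_pos.trans hr
    rw [smul_eq_mul, Real.norm_of_nonneg (mul_nonneg (by positivity) (profile_nonneg hr0.le)),
      ← key e r hr0]
    gcongr
    exact min_le_right _ _

lemma lintegral_profile_scale {n : ℕ} {d e w : ℝ} (hn : 1 ≤ n) (hd : d < n) (he : n < e)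
    (hw : 0 < w) :
    ∫⁻ y : Fin n → ℝ, ENNReal.ofReal (w ^ (-(n : ℝ)) * profile d e (‖y‖ / w)) =
      ENNReal.ofReal (∫ y : Fin n → ℝ, profile d e ‖y‖) := by
  have h := integrable_profile hn hd he
  have h1 : ∀ y : Fin n → ℝ, ‖y‖ / w = ‖w⁻¹ • y‖ := fun y => by
    rw [norm_smul, Real.norm_of_nonneg (by positivity), div_eq_inv_mul]
  have h2 : Integrable fun y : Fin n → ℝ => w ^ (-(n : ℝ)) * profile d e (‖y‖ / w) := by
    simp only [h1]
    exact (h.comp_smul (R := w⁻¹) (by positivity)).const_mul _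
  rw [← ofReal_integral_eq_lintegral_ofReal h2 (Filter.Eventually.of_forall fun y =>
    mul_nonneg (by positivity) (profile_nonneg (by positivity)))]
  congr 1
  rw [integral_const_mul]
  simp only [h1]
  rw [Measure.integral_comp_inv_smul_of_nonneg volume
    (fun y : Fin n → ℝ => profile d e ‖y‖) hw.le, smul_eq_mul, ← mul_assoc]
  rw [finrank_fin_fun, ← Real.rpow_natCast, ← Real.rpow_add hw, neg_add_cancel, Real.rpow_zero,
    one_mul]

/-- On the region `v ≤ u` the critical integrand is controlled by a rescaled profile: `u^{-a}` is
traded for `w^{-a}` near the origin and for `v^{-a}` far away. -/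
lemma pw_crit {u v w ρ M a b c N : ℝ} (hρ : 0 < ρ) (hρv : ρ ≤ v) (hw : 1 ≤ w)
    (hM : 1 ≤ M) (hvu : v ≤ u) (hwu : w ≤ M * u) (ha : 0 < a) (hb : 0 < b)
    (hN : a + b - c = N) :
    w ^ c * u ^ (-a) * v ^ (-b) ≤ M ^ a * (w ^ (-N) * profile b (a + b) (ρ / w)) := by
  have hv0 : 0 < v := by linarith
  have hu0 : 0 < u := by linarith
  have hw0 : 0 < w := by linarith
  have hM0 : 0 < M := by linarith
  have key : ∀ q : ℝ, w ^ (-N) * (ρ / w) ^ (-q) = w ^ (q - N) * ρ ^ (-q) := by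
    intro q
    rw [Real.div_rpow hρ.le hw0.le, Real.rpow_neg hw0.le q, div_inv_eq_mul, sub_eq_add_neg,
      Real.rpow_add hw0]
    ring
  unfold profile
  rw [mul_min_of_nonneg _ _ (by positivity), mul_min_of_nonneg _ _ (by positivity), key, key]
  apply le_min
  · calc w ^ c * u ^ (-a) * v ^ (-b) ≤ w ^ c * (w / M) ^ (-a) * ρ ^ (-b) := by
          gcongr ?_ * ?_ * ?_
          · exact Real.rpow_le_rpow_of_nonpos (by positivity)
              ((div_le_iff₀' hM0).2 hwu) (by linarith)
          · exact Real.rpow_le_rpow_of_nonpos hρ hρv (by linarith)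
      _ = M ^ a * (w ^ (c + -a) * ρ ^ (-b)) := by
          rw [Real.div_rpow hw0.le hM0.le, Real.rpow_neg hM0.le, div_inv_eq_mul,
            Real.rpow_add hw0]
          ring
      _ = _ := by congr 3; linarith
  · calc w ^ c * u ^ (-a) * v ^ (-b) ≤ w ^ c * ρ ^ (-a) * ρ ^ (-b) := by
          gcongr ?_ * ?_ * ?_
          · exact Real.rpow_le_rpow_of_nonpos hρ (hρv.trans hvu) (by linarith)
          · exact Real.rpow_le_rpow_of_nonpos hρ hρv (by linarith)
      _ = 1 * (w ^ c * ρ ^ (-(a + b))) := by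
          rw [neg_add, Real.rpow_add hρ]; ring
      _ ≤ M ^ a * (w ^ c * ρ ^ (-(a + b))) := by
          gcongr
          exact Real.one_le_rpow hM ha.le
      _ = _ := by congr 3; linarith

lemma bounded_of_eq {n : ℕ} {a b c : ℝ} (hn : 1 ≤ n) (hc : 0 < c) (ha : c < a) (hb : c < b)
    (h : a + b - c = n) : ∃ C : ℝ≥0, ∀ x, brInt n a b c x ≤ C := by
  set M : ℝ := 4 * (n + 1) with hM
  have hM1 : 1 ≤ M := by have : (0 : ℝ) ≤ n := n.cast_nonneg
                         linarith
  have : Nonempty (Fin n) := ⟨⟨0, hn⟩⟩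
  have hne : ∀ z : Fin n → ℝ, ∀ᵐ y : Fin n → ℝ, y ≠ z := fun z =>
    compl_mem_ae_iff.2 (measure_singleton z)
  have hba : b + a - c = n := by linarith
  set I₁ := ENNReal.ofReal (∫ y : Fin n → ℝ, profile b (a + b) ‖y‖)
  set I₂ := ENNReal.ofReal (∫ y : Fin n → ℝ, profile a (b + a) ‖y‖)
  have hfin : ENNReal.ofReal (M ^ a) * I₁ + ENNReal.ofReal (M ^ b) * I₂ ≠ ∞ := by
    finiteness
  refine ⟨(ENNReal.ofReal (M ^ a) * I₁ + ENNReal.ofReal (M ^ b) * I₂).toNNReal, fun x => ?_⟩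
  rw [ENNReal.coe_toNNReal hfin]
  have hw := one_le_rbr x
  have hw0 : 0 < rbr x := by linarith
  have e₁ := lintegral_profile_scale (d := b) (e := a + b) hn (by linarith) (by linarith) hw0
  have e₂ := lintegral_profile_scale (d := a) (e := b + a) hn (by linarith) (by linarith) hw0
  rw [← lintegral_sub_left_eq_self _ x] at e₂
  have hmeas : Measurable fun y : Fin n → ℝ => ENNReal.ofReal (M ^ a) *
      ENNReal.ofReal (rbr x ^ (-(n : ℝ)) * profile b (a + b) (‖y‖ / rbr x)) := by
    have := measurable_profile b (a + b)
    fun_prop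
  calc brInt n a b c x ≤ ∫⁻ y, (ENNReal.ofReal (M ^ a) *
        ENNReal.ofReal (rbr x ^ (-(n : ℝ)) * profile b (a + b) (‖y‖ / rbr x)) +
        ENNReal.ofReal (M ^ b) *
        ENNReal.ofReal (rbr x ^ (-(n : ℝ)) * profile a (b + a) (‖x - y‖ / rbr x))) := by
        refine lintegral_mono_ae ?_
        filter_upwards [hne 0, hne x] with y hy0 hyx
        have hv := norm_le_rbr y
        have hu := norm_le_rbr (x - y)
        rcases rbr_cmp x y with ⟨h1, h2⟩ | ⟨h1, h2⟩
        · refine le_add_right ?_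
          rw [← ENNReal.ofReal_mul (by positivity)]
          exact ENNReal.ofReal_le_ofReal (pw_crit (norm_pos_iff.2 hy0) hv hw hM1 h1 h2
            (by linarith) (by linarith) h)
        · refine le_add_left ?_
          rw [← ENNReal.ofReal_mul (by positivity), mul_right_comm]
          exact ENNReal.ofReal_le_ofReal (pw_crit (norm_pos_iff.2 (sub_ne_zero.2 hyx.symm)) hu hw
            hM1 h1 h2 (by linarith) (by linarith) hba)
    _ = _ := by
        rw [lintegral_add_left hmeas, lintegral_const_mul' _ _ ENNReal.ofReal_ne_top,
          lintegral_const_mul' _ _ ENNReal.ofReal_ne_top, e₁, e₂]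

/-! ### Necessary conditions -/

/-- Scaling obstruction: on `‖y‖ < ‖x‖` the integrand is at least a multiple of `‖x‖^{c-a-b}`. -/
lemma le_of_bounded {n : ℕ} {a b c : ℝ} (hn : 1 ≤ n) (ha : 0 ≤ a) (hb : 0 ≤ b) (hc : 0 ≤ c)
    (h : ∃ C : ℝ≥0, ∀ x, brInt n a b c x ≤ C) : n ≤ a + b - c := by
  obtain ⟨C, hC⟩ := h
  have : Nonempty (Fin n) := ⟨⟨0, hn⟩⟩
  set K : ℝ := n + 1 with hK
  have hK0 : 0 < K := by positivity
  set k : ℝ := (1 / 2) ^ c * (2 * K) ^ (-a) * K ^ (-b) with hk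
  have hk0 : 0 < k := by positivity
  by_contra! hlt
  have bound : ∀ T : ℝ, 2 ≤ T → T ^ (n - (a + b - c)) ≤ C / k := by
    intro T hT
    have hT0 : 0 < T := by linarith
    let x : Fin n → ℝ := fun _ => T - 1
    have hx : ‖x‖ = T - 1 := by
      simp only [x, pi_norm_const, Real.norm_eq_abs]
      exact abs_of_nonneg (by linarith)
    have hlow : ∀ y ∈ Metric.ball (0 : Fin n → ℝ) (T - 1),
        ENNReal.ofReal (k * T ^ (c - a - b)) ≤
        ENNReal.ofReal (rbr x ^ c * rbr (x - y) ^ (-a) * rbr y ^ (-b)) := by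
      intro y hy
      rw [mem_ball_zero_iff] at hy
      have hw := one_le_rbr x
      have hw' := norm_le_rbr x
      have hv := one_le_rbr y
      have hu := one_le_rbr (x - y)
      have hv' : rbr y ≤ K * T := (rbr_le_norm y).trans (by gcongr; linarith)
      have hu' : rbr (x - y) ≤ 2 * K * T := by
        refine (rbr_le_norm (x - y)).trans ?_
        have := norm_sub_le x y
        calc K * (1 + ‖x - y‖) ≤ K * (2 * T) := by gcongr; linarith
          _ = _ := by ring
      apply ENNReal.ofReal_le_ofReal
      calc k * T ^ (c - a - b) = (1 / 2 * T) ^ c * (2 * K * T) ^ (-a) * (K * T) ^ (-b) := by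
            rw [Real.mul_rpow (by positivity) hT0.le, Real.mul_rpow (by positivity) hT0.le,
              Real.mul_rpow (by positivity) hT0.le, sub_eq_add_neg, sub_eq_add_neg,
              Real.rpow_add hT0, Real.rpow_add hT0, hk]
            ring
        _ ≤ _ := by
            gcongr ?_ * ?_ * ?_
            · exact Real.rpow_le_rpow (by positivity) (by linarith) hc
            · exact Real.rpow_le_rpow_of_nonpos (by positivity) hu' (by linarith)
            · exact Real.rpow_le_rpow_of_nonpos (by positivity) hv' (by linarith)
    have h1 : ENNReal.ofReal (k * T ^ (c - a - b)) * volume (Metric.ball (0 : Fin n → ℝ) (T - 1))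
        ≤ C := by
      rw [← setLIntegral_const]
      exact (setLIntegral_mono' measurableSet_ball hlow).trans
        ((setLIntegral_le_lintegral _ _).trans (hC x))
    rw [Real.volume_pi_ball _ (by linarith), ← ENNReal.ofReal_mul (by positivity),
      Fintype.card_fin, ← ENNReal.ofReal_coe_nnreal,
      ENNReal.ofReal_le_ofReal_iff C.coe_nonneg] at h1
    rw [le_div_iff₀ hk0]
    calc T ^ (n - (a + b - c)) * k = k * T ^ (c - a - b) * T ^ n := by
          rw [mul_assoc, ← Real.rpow_natCast, ← Real.rpow_add hT0, mul_comm]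
          congr 2; ring
      _ ≤ k * T ^ (c - a - b) * (2 * (T - 1)) ^ n := by gcongr; linarith
      _ ≤ C := h1
  obtain ⟨T, hT, hT2⟩ := ((((tendsto_rpow_atTop (sub_pos.2 hlt)).eventually_gt_atTop
    (C / k : ℝ)).and (Filter.eventually_ge_atTop 2))).exists
  exact absurd (bound T hT2) (not_le.2 hT)

lemma lt_of_lintegral_rbr_lt_top {n : ℕ} {b : ℝ} (hn : 1 ≤ n) (hb : 0 ≤ b)
    (h : ∫⁻ y : Fin n → ℝ, ENNReal.ofReal (rbr y ^ (-b)) < ∞) : n < b := by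
  have : Nontrivial (Fin n → ℝ) := by
    have : Nonempty (Fin n) := ⟨⟨0, hn⟩⟩
    infer_instance
  set K : ℝ := n + 1 with hK
  have hK0 : 0 < K := by positivity
  have h1 : Integrable (fun y : Fin n → ℝ => rbr y ^ (-b)) := by
    have hm := (continuous_rbr (n := n)).measurable
    refine ⟨Measurable.aestronglyMeasurable (by fun_prop), ?_⟩
    rwa [hasFiniteIntegral_iff_ofReal (Filter.Eventually.of_forall fun y =>
      Real.rpow_nonneg (zero_le_one.trans (one_le_rbr y)) _)]
  have h2 : Integrable (fun y : Fin n → ℝ => (K * (1 + ‖y‖)) ^ (-b)) := by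
    refine h1.mono' (Measurable.aestronglyMeasurable (by fun_prop))
      (Filter.Eventually.of_forall fun y => ?_)
    rw [Real.norm_of_nonneg (by positivity)]
    exact Real.rpow_le_rpow_of_nonpos (zero_lt_one.trans_le (one_le_rbr y)) (rbr_le_norm y)
      (by linarith)
  rw [integrable_fun_norm_addHaar volume (f := fun r : ℝ => (K * (1 + r)) ^ (-b))] at h2
  have h3 : IntegrableOn (fun r : ℝ => r ^ ((n : ℝ) - 1 - b)) (Set.Ioi 1) := by
    have h4 := (h2.mono_set (Set.Ioi_subset_Ioi zero_le_one)).const_mul ((2 * K) ^ b)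
    refine Integrable.mono' h4 (Measurable.aestronglyMeasurable (by fun_prop)) ?_
    filter_upwards [ae_restrict_mem measurableSet_Ioi] with r hr
    have hr1 : 1 < r := hr
    have hr0 : 0 < r := by linarith
    rw [Real.norm_of_nonneg (by positivity), smul_eq_mul]
    calc r ^ ((n : ℝ) - 1 - b)
        = (2 * K) ^ b * (r ^ (finrank ℝ (Fin n → ℝ) - 1) * (2 * K * r) ^ (-b)) := by
          have e : r ^ (finrank ℝ (Fin n → ℝ) - 1) = r ^ ((n : ℝ) - 1) := by
            rw [← Real.rpow_natCast]; simp [Nat.cast_sub hn]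
          rw [e, sub_eq_add_neg _ b, Real.rpow_add hr0, Real.mul_rpow (by positivity) hr0.le,
            Real.rpow_neg (by positivity : 0 ≤ 2 * K)]
          field_simp
      _ ≤ _ := by
          gcongr ?_ * (?_ * ?_)
          exact Real.rpow_le_rpow_of_nonpos (by positivity) (by nlinarith) (by linarith)
  rw [integrableOn_Ioi_rpow_iff one_pos] at h3
  linarith

/-- When `a = c`, the factor `(⟨x⟩/⟨x-y⟩)^a` is bounded below on `‖y‖ < ‖x‖`, so boundedness as
`x → ∞` forces `⟨y⟩^{-b}` to be integrable. -/
lemma lt_of_bounded {n : ℕ} {a b : ℝ} (hn : 1 ≤ n) (ha : 0 ≤ a) (hb : 0 ≤ b)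
    (h : ∃ C : ℝ≥0, ∀ x, brInt n a b a x ≤ C) : n < b := by
  obtain ⟨C, hC⟩ := h
  have : Nonempty (Fin n) := ⟨⟨0, hn⟩⟩
  apply lt_of_lintegral_rbr_lt_top hn hb
  set K : ℝ := n + 1 with hK
  have hK0 : 0 < K := by positivity
  have bound : ∀ k : ℕ, ∫⁻ y in Metric.ball (0 : Fin n → ℝ) k, ENNReal.ofReal (rbr y ^ (-b)) ≤
      ENNReal.ofReal ((4 * K) ^ a) * C := by
    intro k
    let x : Fin n → ℝ := fun _ => k
    have hx : ‖x‖ = k := by simp [x]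
    calc _ ≤ ∫⁻ y in Metric.ball (0 : Fin n → ℝ) k, ENNReal.ofReal ((4 * K) ^ a) *
          ENNReal.ofReal (rbr x ^ a * rbr (x - y) ^ (-a) * rbr y ^ (-b)) := by
          refine setLIntegral_mono' measurableSet_ball fun y hy => ?_
          rw [mem_ball_zero_iff] at hy
          have hw := one_le_rbr x
          have hw' := norm_le_rbr x
          have hv := one_le_rbr y
          have hu := one_le_rbr (x - y)
          have hu' : rbr (x - y) ≤ 4 * K * rbr x := by
            refine (rbr_le_norm (x - y)).trans ?_
            have := norm_sub_le x y
            calc K * (1 + ‖x - y‖) ≤ K * (4 * rbr x) := by gcongr; linarith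
              _ = _ := by ring
          rw [← ENNReal.ofReal_mul (by positivity)]
          apply ENNReal.ofReal_le_ofReal
          have h1 : 1 ≤ (4 * K) ^ a * (rbr x ^ a * rbr (x - y) ^ (-a)) := by
            rw [← mul_assoc, ← Real.mul_rpow (by positivity) (by positivity),
              Real.rpow_neg (by positivity), ← div_eq_mul_inv, one_le_div (by positivity)]
            exact Real.rpow_le_rpow (by positivity) hu' ha
          rw [← mul_assoc]
          exact le_mul_of_one_le_left (by positivity) h1
      _ = ENNReal.ofReal ((4 * K) ^ a) * ∫⁻ y in Metric.ball (0 : Fin n → ℝ) k,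
          ENNReal.ofReal (rbr x ^ a * rbr (x - y) ^ (-a) * rbr y ^ (-b)) :=
          lintegral_const_mul' _ _ ENNReal.ofReal_ne_top
      _ ≤ _ := by
          gcongr
          exact (setLIntegral_le_lintegral _ _).trans (hC x)
  have hmono : Monotone fun k : ℕ => Metric.ball (0 : Fin n → ℝ) k := fun i j hij =>
    Metric.ball_subset_ball (by exact_mod_cast hij)
  have hU : ∫⁻ y : Fin n → ℝ, ENNReal.ofReal (rbr y ^ (-b)) =
      ⨆ k : ℕ, ∫⁻ y in Metric.ball (0 : Fin n → ℝ) k, ENNReal.ofReal (rbr y ^ (-b)) := by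
    rw [← setLIntegral_iUnion_of_directed _ hmono.directed_le, Metric.iUnion_ball_nat,
      setLIntegral_univ]
  rw [hU]
  exact (iSup_le bound).trans_lt (by finiteness)

/-! ### The exponent `t = ∞` and conclusion -/

lemma bounded_top {n : ℕ} {s s₁ s₂ : ℝ} (hs : 0 < s) (h₁ : s ≤ s₁) (h₂ : s ≤ s₂) :
    ∃ C : ℝ≥0, ∀ x : Fin n → ℝ,
      Lns n ∞ 0 (fun y => ENNReal.ofReal (rbr x ^ s / (rbr (x - y) ^ s₁ * rbr y ^ s₂))) ≤ C := by
  refine ⟨((4 * (n + 1) : ℝ) ^ s).toNNReal, fun x => ?_⟩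
  unfold Lns
  rw [if_pos rfl]
  refine essSup_le_of_ae_le _ (Filter.Eventually.of_forall fun y => ?_)
  simp only [Real.rpow_zero, ENNReal.ofReal_one, mul_one]
  refine ENNReal.ofReal_le_ofReal ?_
  have hw := one_le_rbr x
  have hv := one_le_rbr y
  have hu := one_le_rbr (x - y)
  rw [div_le_iff₀ (by positivity)]
  have h3 : rbr x ≤ 4 * (n + 1) * (rbr (x - y) * rbr y) := by
    rcases rbr_cmp x y with ⟨_, h⟩ | ⟨_, h⟩
    · exact h.trans (by gcongr; exact le_mul_of_one_le_right (by linarith) hv)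
    · exact h.trans (by gcongr; exact le_mul_of_one_le_left (by linarith) hu)
  calc rbr x ^ s ≤ (4 * (n + 1) * (rbr (x - y) * rbr y)) ^ s := by gcongr
    _ = (4 * (n + 1)) ^ s * (rbr (x - y) ^ s * rbr y ^ s) := by
        rw [Real.mul_rpow (by positivity) (by positivity),
          Real.mul_rpow (x := rbr (x - y)) (by positivity) (by positivity)]
    _ ≤ _ := by gcongr

/-- integral capability of the weight `⟨x⟩`, continuous form. -/
theorem integral_capability_continuous
    (n : ℕ) (hn : 1 ≤ n) (s s₁ s₂ : ℝ) (hs : 0 < s) (h₁ : s ≤ s₁) (h₂ : s ≤ s₂) :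
    ((s = s₁ ∨ s = s₂) → ∀ t : ℝ≥0∞, 0 < t →
      ((∃ C : ℝ≥0, ∀ x : Fin n → ℝ,
          Lns n t 0 (fun y => ENNReal.ofReal (rbr x ^ s / (rbr (x - y) ^ s₁ * rbr y ^ s₂))) ≤ C)
        ↔ ENNReal.ofReal ((n : ℝ) / (s₁ + s₂ - s)) < t)) ∧
    ((s < s₁ ∧ s < s₂) → ∀ t : ℝ≥0∞, 0 < t →
      ((∃ C : ℝ≥0, ∀ x : Fin n → ℝ,
          Lns n t 0 (fun y => ENNReal.ofReal (rbr x ^ s / (rbr (x - y) ^ s₁ * rbr y ^ s₂))) ≤ C)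
        ↔ ENNReal.ofReal ((n : ℝ) / (s₁ + s₂ - s)) ≤ t)) := by
  have hσ : 0 < s₁ + s₂ - s := by linarith
  -- for finite `t = p`, both conditions on `t` are comparisons of `n` with `s₁p + s₂p - sp`
  have hlt : ∀ p : ℝ, 0 < p → (ENNReal.ofReal ((n : ℝ) / (s₁ + s₂ - s)) < ENNReal.ofReal p ↔
      n < s₁ * p + s₂ * p - s * p) := fun p hp => by
    rw [ENNReal.ofReal_lt_ofReal_iff hp, div_lt_iff₀' hσ, sub_mul, add_mul]
  have hle : ∀ p : ℝ, 0 < p → (ENNReal.ofReal ((n : ℝ) / (s₁ + s₂ - s)) ≤ ENNReal.ofReal p ↔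
      n ≤ s₁ * p + s₂ * p - s * p) := fun p hp => by
    rw [ENNReal.ofReal_le_ofReal_iff hp.le, div_le_iff₀' hσ, sub_mul, add_mul]
  constructor
  · intro heq t ht
    rcases eq_or_ne t ∞ with rfl | htop
    · exact iff_of_true (bounded_top hs h₁ h₂) ENNReal.ofReal_lt_top
    obtain ⟨p, rfl⟩ : ∃ p : ℝ, t = ENNReal.ofReal p := ⟨_, (ENNReal.ofReal_toReal htop).symm⟩
    have hp : 0 < p := ENNReal.ofReal_pos.1 ht
    have q := mul_pos hs hp
    have q₁ := mul_le_mul_of_nonneg_right h₁ hp.le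
    have q₂ := mul_le_mul_of_nonneg_right h₂ hp.le
    rw [exists_bound_Lns_iff hp, hlt p hp]
    refine ⟨fun h => ?_, bounded_of_lt q q₁ q₂⟩
    rcases heq with rfl | rfl
    · linarith [lt_of_bounded hn q.le (by linarith) h]
    · simp only [brInt_symm (s₁ * p)] at h
      linarith [lt_of_bounded hn q.le (by linarith) h]
  · rintro ⟨h₁', h₂'⟩ t ht
    rcases eq_or_ne t ∞ with rfl | htop
    · exact iff_of_true (bounded_top hs h₁ h₂) le_top
    obtain ⟨p, rfl⟩ : ∃ p : ℝ, t = ENNReal.ofReal p := ⟨_, (ENNReal.ofReal_toReal htop).symm⟩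
    have hp : 0 < p := ENNReal.ofReal_pos.1 ht
    have q := mul_pos hs hp
    have q₁ := mul_lt_mul_of_pos_right h₁' hp
    have q₂ := mul_lt_mul_of_pos_right h₂' hp
    rw [exists_bound_Lns_iff hp, hle p hp]
    refine ⟨le_of_bounded hn (by linarith) (by linarith) q.le, fun h => ?_⟩
    rcases h.lt_or_eq with h | h
    · exact bounded_of_lt q q₁.le q₂.le h
    · exact bounded_of_eq hn q q₁ q₂ h.symm
end
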